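/- Let M∈LC satisfy the single-sequence condition (12L2R) and derivation closedness (M2'), and assume the associated function ω_M satisfies condition (α). Then the following are equivalent: (i) M satisfies moderate growth (M2); (ii) there exists a weight function ω satisfying condition (ω6) (∃H≥1 ∀t≥0: 2ω(t) ≤ ω(Ht)+H) such that S_{{ω}}(ℝ^d)=S_{{M}}(ℝ^d) for every dimension d∈ℕ. Moreover, when (i) holds, ω can be taken to be the associated function ω_M. -/

import Mathlib

/-! The theorem rests on comparing `M` with the sequence `N_p = exp (φ*_ω p)`, which is `wSeq ω 1`.

*Function classes as sequence classes.* Condition (α) absorbs factors `h ^ p` into a change of the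
parameter `l` of `wWeight`, and condition (ω6) conversely turns a change of `l` into a factor
`h ^ p`. Hence `S_{ω} = S_{N}` for a weight function `ω` with (ω6) (`SRoumieuW_eq_seq`).

*Moderate growth gives (ω6).* Log-convexity makes the Young conjugate of `ω_M` at `p` equal to
`log M_p` (`wSeq_assocFun`), so `N = M` for `ω = ω_M`. Moderate growth of `M` gives (ω6) for `ω_M`,
and (12L2R) with `q = 0` gives both the finiteness of `ω_M` and the bound (β).

*The converse.* (ω6) gives moderate growth of `N` (`wSeq_modGrowth`), so it suffices to show that
`M` and `N` agree up to geometric factors. This is read off from an extremal function in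
dimension one, available for every positive log-convex sequence `Q` satisfying (12L2R):
`f x = ∑ c_k exp (-(x - x_k)² / 2)` with `x_k = Q_{k+1} / Q_k` and `c_k = 2^{-k} Q_k / x_k^k`.
Log-convexity says that `Q_k x_k^i ≤ Q_i x_k^k` for all `i`, so `∑ c_k x_k^i ≤ 2 Q_i`; together with
`|y^a g^{(b)}(y)| ≤ 2^b (a+b)^{(a+b)/2}` for the Gaussian `g` and (12L2R) this puts `f` into `S_{Q}`.
All terms are positive, so `x_p^p f(x_p) ≥ 2^{-p} Q_p`, and membership of `f` in `S_{P}`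
forces `Q_p ≤ C h^p P_p` (`seq_compare`). Applied to `M` and to `N` this gives both comparisons. -/

open Filter Asymptotics

noncomputable section

/-- Partial derivative operator in coordinate `i`. -/
def pderivOp {d : ℕ} (i : Fin d) (f : (Fin d → ℝ) → ℝ) : (Fin d → ℝ) → ℝ :=
  fun x => fderiv ℝ f x (Pi.single i 1)

/-- Iterated partial derivative `∂^β f` for a multi-index `β`. -/
def mderiv {d : ℕ} (β : Fin d → ℕ) (f : (Fin d → ℝ) → ℝ) : (Fin d → ℝ) → ℝ :=
  (List.finRange d).foldr (fun i g => (pderivOp i)^[β i] g) f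

/-- The monomial `x^α` for a multi-index `α`. -/
def mpow {d : ℕ} (x : Fin d → ℝ) (α : Fin d → ℕ) : ℝ := ∏ i, x i ^ α i

/-- The length `|α| = α 0 + ⋯ + α (d-1)` of a multi-index. -/
def msize {d : ℕ} (α : Fin d → ℕ) : ℕ := ∑ i, α i

/-- Young conjugate `φ*_ω(s) = sup_{t ≥ 0} (s·t − ω(e^t))`. -/
def youngConj (ω : ℝ → ℝ) (s : ℝ) : ℝ :=
  sSup {y : ℝ | ∃ t : ℝ, 0 ≤ t ∧ y = s * t - ω (Real.exp t)}

/-- A general weight function: continuous, increasing, `ω:[0,∞)→[0,∞)`, with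
conditions (α), (γ), (δ) (condition (β) is not required). -/
structure IsGenWeightFun (ω : ℝ → ℝ) : Prop where
  nonneg : ∀ t, 0 ≤ t → 0 ≤ ω t
  continuous : ContinuousOn ω (Set.Ici 0)
  mono : MonotoneOn ω (Set.Ici 0)
  alpha : ∃ L : ℝ, 1 ≤ L ∧ ∀ t, 0 ≤ t → ω (2 * t) ≤ L * (ω t + 1)
  gamma : Real.log =o[Filter.atTop] ω
  delta : ConvexOn ℝ (Set.Ici 0) fun t => ω (Real.exp t)

/-- A weight function: a general weight function which moreover satisfies
(β): `ω(t) = O(t²)` as `t → ∞`. -/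
structure IsWeightFun (ω : ℝ → ℝ) extends IsGenWeightFun ω : Prop where
  beta : ω =O[Filter.atTop] fun t : ℝ => t ^ 2

/-- The weight `exp((1/l)·φ*_ω(l·k))`. -/
def wWeight (ω : ℝ → ℝ) (l : ℝ) (k : ℕ) : ℝ :=
  Real.exp (1 / l * youngConj ω (l * (k : ℝ)))

/-- Roumieu Gelfand–Shilov class `S_{{ω}}(ℝ^d)`. -/
def SRoumieuW (ω : ℝ → ℝ) (d : ℕ) : Set ((Fin d → ℝ) → ℝ) :=
  {f | ContDiff ℝ (⊤ : ℕ∞) f ∧ ∃ l > 0, ∃ C > 0, ∀ α β : Fin d → ℕ, ∀ x : Fin d → ℝ,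
    |mpow x α * mderiv β f x| ≤ C * wWeight ω l (msize α + msize β)}

/-- Beurling Gelfand–Shilov class `S_{(ω)}(ℝ^d)`. -/
def SBeurlingW (ω : ℝ → ℝ) (d : ℕ) : Set ((Fin d → ℝ) → ℝ) :=
  {f | ContDiff ℝ (⊤ : ℕ∞) f ∧ ∀ l > 0, ∃ C > 0, ∀ α β : Fin d → ℕ, ∀ x : Fin d → ℝ,
    |mpow x α * mderiv β f x| ≤ C * wWeight ω l (msize α + msize β)}

/-- Continuity of the inclusion `S_(ω)(ℝ^d) ⊆ S_(σ)(ℝ^d)`: for every `μ > 0` there are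
`ν > 0` and `C ≥ 1` with `q_{σ,μ}(f) ≤ C · q_{ω,ν}(f)` for all `f ∈ S_(ω)(ℝ^d)`,
expressed via bounding constants. -/
def contIncBW (ω σ : ℝ → ℝ) (d : ℕ) : Prop :=
  ∀ μ > 0, ∃ ν > 0, ∃ C : ℝ, 1 ≤ C ∧ ∀ f ∈ SBeurlingW ω d, ∀ D : ℝ, 0 ≤ D →
    (∀ α β : Fin d → ℕ, ∀ x : Fin d → ℝ,
      |mpow x α * mderiv β f x| ≤ D * wWeight ω ν (msize α + msize β)) →
    (∀ α β : Fin d → ℕ, ∀ x : Fin d → ℝ,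
      |mpow x α * mderiv β f x| ≤ C * D * wWeight σ μ (msize α + msize β))

/-- `M ∈ LC`: normalized, log-convex, with `M_p^{1/p} → ∞`. -/
structure IsLC (M : ℕ → ℝ) : Prop where
  pos : ∀ p, 0 < M p
  norm0 : M 0 = 1
  norm1 : 1 ≤ M 1
  logConvex : ∀ p : ℕ, M (p + 1) ^ 2 ≤ M p * M (p + 2)
  root_tendsto : Filter.Tendsto (fun p : ℕ => M p ^ (1 / (p : ℝ))) Filter.atTop Filter.atTop

/-- `M ⪯ N`: `∃ C ≥ 1, ∀ p, M_p ≤ C^p N_p`. -/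
def seqPreceq (M N : ℕ → ℝ) : Prop := ∃ C : ℝ, 1 ≤ C ∧ ∀ p : ℕ, M p ≤ C ^ p * N p

/-- `M ◁ N`: `(M_p/N_p)^{1/p} → 0`. -/
def seqLtriangle (M N : ℕ → ℝ) : Prop :=
  Filter.Tendsto (fun p : ℕ => (M p / N p) ^ (1 / (p : ℝ))) Filter.atTop (nhds 0)

/-- `‖f‖_{∞,M,h} ≤ C`, expressed pointwise. -/
def seqBound {d : ℕ} (M : ℕ → ℝ) (h C : ℝ) (f : (Fin d → ℝ) → ℝ) : Prop :=
  ∀ α β : Fin d → ℕ, ∀ x : Fin d → ℝ,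
    |mpow x α * mderiv β f x| ≤ C * h ^ (msize α + msize β) * M (msize α + msize β)

/-- Roumieu class `S_{{M}}(ℝ^d)` for a single weight sequence. -/
def SRoumieuSeq (M : ℕ → ℝ) (d : ℕ) : Set ((Fin d → ℝ) → ℝ) :=
  {f | ContDiff ℝ (⊤ : ℕ∞) f ∧ ∃ C > 0, ∃ h > 0, seqBound M h C f}

/-- Beurling class `S_(M)(ℝ^d)` for a single weight sequence. -/
def SBeurlingSeq (M : ℕ → ℝ) (d : ℕ) : Set ((Fin d → ℝ) → ℝ) :=
  {f | ContDiff ℝ (⊤ : ℕ∞) f ∧ ∀ h > 0, ∃ C > 0, seqBound M h C f}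

/-- Moderate growth (M2). -/
def condM2 (M : ℕ → ℝ) : Prop := ∃ C : ℝ, 1 ≤ C ∧ ∀ p q : ℕ, M (p + q) ≤ C ^ (p + q) * M p * M q

/-- Derivation closedness (M2'). -/
def condM2' (M : ℕ → ℝ) : Prop := ∃ D : ℝ, 1 ≤ D ∧ ∀ p : ℕ, M (p + 1) ≤ D ^ (p + 1) * M p

/-- Condition (12L2R) for a single sequence. -/
def cond12L2Rseq (M : ℕ → ℝ) : Prop :=
  ∃ B > 0, ∃ C > 0, ∃ H > 0, ∀ p q : ℕ,
    (p : ℝ) ^ ((p : ℝ) / 2) * M q ≤ B * C ^ p * H ^ (p + q) * M (p + q)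

/-- Condition (12L2B) for a single sequence. -/
def cond12L2Bseq (M : ℕ → ℝ) : Prop :=
  ∃ H > 0, ∀ C > 0, ∃ B > 0, ∀ p q : ℕ,
    (p : ℝ) ^ ((p : ℝ) / 2) * M q ≤ B * C ^ p * H ^ (p + q) * M (p + q)

/-- Non-quasianalyticity of a weight sequence: `∑ M_{p-1}/M_p < ∞`. -/
def nonQA (M : ℕ → ℝ) : Prop := Summable fun p : ℕ => M p / M (p + 1)

/-- Continuity of the inclusion `S_(M)(ℝ^d) ⊆ S_(N)(ℝ^d)` for single sequences. -/
def contIncBSeq (M N : ℕ → ℝ) (d : ℕ) : Prop :=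
  ∀ h > 0, ∃ h' > 0, ∃ C : ℝ, 1 ≤ C ∧ ∀ f ∈ SBeurlingSeq M d, ∀ D : ℝ, 0 ≤ D →
    seqBound M h' D f → seqBound N h (C * D) f

/-- A weight matrix: positive normalized sequences, pointwise nondecreasing in the index. -/
def IsWeightMatrix (M : ℝ → ℕ → ℝ) : Prop :=
  (∀ l, 0 < l → (∀ p, 0 < M l p) ∧ M l 0 = 1) ∧
    ∀ l k, 0 < l → l ≤ k → ∀ p, M l p ≤ M k p

/-- Standard log-convexity of a weight matrix. -/
def StdLogConvex (M : ℝ → ℕ → ℝ) : Prop := ∀ l, 0 < l → IsLC (M l)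

/-- Roumieu class `S_{{𝓜}}(ℝ^d)` for a weight matrix. -/
def SRoumieuMat (M : ℝ → ℕ → ℝ) (d : ℕ) : Set ((Fin d → ℝ) → ℝ) :=
  {f | ∃ l > 0, f ∈ SRoumieuSeq (M l) d}

/-- Beurling class `S_(𝓜)(ℝ^d)` for a weight matrix. -/
def SBeurlingMat (M : ℝ → ℕ → ℝ) (d : ℕ) : Set ((Fin d → ℝ) → ℝ) :=
  {f | ∀ l > 0, f ∈ SBeurlingSeq (M l) d}

/-- `𝓜{⪯}𝓝`. -/
def matPreceqR (M N : ℝ → ℕ → ℝ) : Prop := ∀ l > 0, ∃ k > 0, seqPreceq (M l) (N k)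

/-- `𝓜(⪯)𝓝`. -/
def matPreceqB (M N : ℝ → ℕ → ℝ) : Prop := ∀ l > 0, ∃ k > 0, seqPreceq (M k) (N l)

/-- `𝓜 ◁ 𝓝`. -/
def matLtriangle (M N : ℝ → ℕ → ℝ) : Prop := ∀ l > 0, ∀ k > 0, seqLtriangle (M l) (N k)

/-- Condition (12L2R) for a weight matrix (Roumieu). -/
def cond12L2RMat (M : ℝ → ℕ → ℝ) : Prop :=
  ∀ l > 0, ∃ k, l ≤ k ∧ ∃ B > 0, ∃ C > 0, ∃ H > 0, ∀ p q : ℕ,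
    (p : ℝ) ^ ((p : ℝ) / 2) * M l q ≤ B * C ^ p * H ^ (p + q) * M k (p + q)

/-- Condition (M2')_R for a weight matrix (Roumieu). -/
def condM2'RMat (M : ℝ → ℕ → ℝ) : Prop :=
  ∀ l > 0, ∃ k, l ≤ k ∧ ∃ A : ℝ, 1 ≤ A ∧ ∀ p : ℕ, M l (p + 1) ≤ A ^ (p + 1) * M k p

/-- Condition (12L2B) for a weight matrix (Beurling). -/
def cond12L2BMat (M : ℝ → ℕ → ℝ) : Prop :=
  ∀ l > 0, ∃ k, 0 < k ∧ k ≤ l ∧ ∃ H > 0, ∀ C > 0, ∃ B > 0, ∀ p q : ℕ,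
    (p : ℝ) ^ ((p : ℝ) / 2) * M k q ≤ B * C ^ p * H ^ (p + q) * M l (p + q)

/-- Condition (M2')_B for a weight matrix (Beurling). -/
def condM2'BMat (M : ℝ → ℕ → ℝ) : Prop :=
  ∀ l > 0, ∃ k, 0 < k ∧ k ≤ l ∧ ∃ A : ℝ, 1 ≤ A ∧ ∀ p : ℕ, M k (p + 1) ≤ A ^ (p + 1) * M l p

/-- Continuity of the inclusion `S_(𝓜)(ℝ^d) ⊆ S_(𝓝)(ℝ^d)` for weight matrices. -/
def contIncBMat (M N : ℝ → ℕ → ℝ) (d : ℕ) : Prop :=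
  ∀ l > 0, ∀ h > 0, ∃ k > 0, ∃ h' > 0, ∃ C : ℝ, 1 ≤ C ∧
    ∀ f ∈ SBeurlingMat M d, ∀ D : ℝ, 0 ≤ D →
      seqBound (M k) h' D f → seqBound (N l) h (C * D) f

/-- Associated function `ω_M(t) = sup_p log(t^p / M_p)`. -/
def assocFun (M : ℕ → ℝ) (t : ℝ) : ℝ :=
  sSup {y : ℝ | ∃ p : ℕ, y = Real.log (t ^ p / M p)}

/-- Condition (α) for a function. -/
def condAlpha (ω : ℝ → ℝ) : Prop := ∃ L : ℝ, 1 ≤ L ∧ ∀ t, 0 ≤ t → ω (2 * t) ≤ L * (ω t + 1)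

/-- Condition (ω6): `∃ H ≥ 1, ∀ t ≥ 0, 2ω(t) ≤ ω(Ht) + H`. -/
def condOmega6 (ω : ℝ → ℝ) : Prop := ∃ H : ℝ, 1 ≤ H ∧ ∀ t, 0 ≤ t → 2 * ω t ≤ ω (H * t) + H

/-- The sequence `W^{(λ)}_p = exp((1/λ)φ*_ω(λ p))`. -/
def wSeq (ω : ℝ → ℝ) (l : ℝ) (p : ℕ) : ℝ := Real.exp (1 / l * youngConj ω (l * (p : ℝ)))

end

/-! ### Log-convex sequences -/

section LogConvex

variable {Q : ℕ → ℝ}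

/-- The quotient `Q_{k+1} / Q_k`. -/
noncomputable def quot (Q : ℕ → ℝ) (k : ℕ) : ℝ := Q (k + 1) / Q k

lemma quot_pos (hp : ∀ p, 0 < Q p) (k : ℕ) : 0 < quot Q k := div_pos (hp _) (hp _)

lemma quot_mono (hp : ∀ p, 0 < Q p) (hl : ∀ p, Q (p + 1) ^ 2 ≤ Q p * Q (p + 2)) :
    Monotone (quot Q) := by
  refine monotone_nat_of_le_succ fun k => ?_
  unfold quot
  rw [div_le_div_iff₀ (hp _) (hp _)]
  nlinarith [hl k]

/-- The index `k` maximizes `i ↦ x ^ i / Q_i` when `x` is the quotient `Q_{k+1} / Q_k`. -/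
lemma quot_extremal (hp : ∀ p, 0 < Q p) (hl : ∀ p, Q (p + 1) ^ 2 ≤ Q p * Q (p + 2)) (k i : ℕ) :
    Q k * quot Q k ^ i ≤ Q i * quot Q k ^ k := by
  have hx := quot_pos hp k
  have step : ∀ j, Q (j + 1) = Q j * quot Q j := fun j => by
    unfold quot; field_simp [(hp j).ne']
  rcases le_total k i with h | h
  · induction i, h using Nat.le_induction with
    | base => exact le_rfl
    | succ i h ih =>
      rw [pow_succ, ← mul_assoc, step i]
      have := quot_mono hp hl h
      calc Q k * quot Q k ^ i * quot Q k ≤ (Q i * quot Q k ^ k) * quot Q i := by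
            gcongr
            exact mul_nonneg (hp i).le (pow_nonneg hx.le _)
        _ = _ := by ring
  · induction h using Nat.decreasingInduction with
    | self => exact le_rfl
    | of_succ i h ih =>
      rw [step i, pow_succ, ← mul_assoc] at ih
      have h1 := quot_mono hp hl (Nat.le_of_lt h)
      have h2 : Q i * quot Q i * quot Q k ^ k ≤ Q i * quot Q k ^ k * quot Q k := by
        have : 0 ≤ Q i * quot Q k ^ k := mul_nonneg (hp i).le (pow_nonneg hx.le _)
        nlinarith
      exact le_of_mul_le_mul_right (ih.trans h2) hx

end LogConvex

/-! ### Derivatives of the Gaussian -/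

/-- The `b`-th derivative of `exp (-y² / 2)`, given by the Hermite recursion. -/
noncomputable def gaussD : ℕ → ℝ → ℝ
  | 0 => fun y => Real.exp (-(y ^ 2) / 2)
  | 1 => fun y => -(y * Real.exp (-(y ^ 2) / 2))
  | (b + 2) => fun y => -(y * gaussD (b + 1) y + (b + 1) * gaussD b y)

lemma gaussD_hasDerivAt_aux (b : ℕ) : (∀ y, HasDerivAt (gaussD b) (gaussD (b + 1) y) y) ∧
    (∀ y, HasDerivAt (gaussD (b + 1)) (gaussD (b + 2) y) y) := by
  induction b with
  | zero =>
    have h0 : ∀ y, HasDerivAt (gaussD 0) (gaussD 1 y) y := fun y => by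
      have h1 : HasDerivAt (fun y : ℝ => -(y ^ 2) / 2) (-y) y := by
        have := ((hasDerivAt_pow 2 y).neg).div_const 2
        exact (by simpa using this : HasDerivAt (fun y : ℝ => -(y ^ 2) / 2) _ y).congr_deriv
          (by ring)
      exact h1.exp.congr_deriv (by simp only [gaussD]; ring)
    refine ⟨h0, fun y => ?_⟩
    have h2 : HasDerivAt (gaussD 1) _ y := ((hasDerivAt_id y).mul (h0 y)).neg
    exact h2.congr_deriv (by simp only [gaussD, id]; push_cast; ring)
  | succ b ih =>
    refine ⟨ih.2, fun y => ?_⟩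
    have h2 : HasDerivAt (gaussD (b + 2)) _ y :=
      (((hasDerivAt_id y).mul (ih.2 y)).add ((ih.1 y).const_mul ((b : ℝ) + 1))).neg
    exact h2.congr_deriv (by simp only [gaussD, id]; push_cast; ring)

lemma gaussD_hasDerivAt (b : ℕ) (y : ℝ) : HasDerivAt (gaussD b) (gaussD (b + 1) y) y :=
  (gaussD_hasDerivAt_aux b).1 y

/-- The sequence `n ^ (n / 2)`. -/
noncomputable def halfPow (n : ℕ) : ℝ := (n : ℝ) ^ ((n : ℝ) / 2)

lemma halfPow_nonneg (n : ℕ) : 0 ≤ halfPow n := Real.rpow_nonneg (Nat.cast_nonneg _) _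

lemma halfPow_eq_exp {n : ℕ} (hn : n ≠ 0) : halfPow n = Real.exp (n / 2 * Real.log n) := by
  have : (0 : ℝ) < n := by positivity
  unfold halfPow
  rw [Real.rpow_def_of_pos this, mul_comm]

lemma halfPow_succ_mul (n : ℕ) : ((n : ℝ) + 1) * halfPow n ≤ halfPow (n + 2) := by
  have h1 : halfPow n ≤ ((n : ℝ) + 2) ^ ((n : ℝ) / 2) :=
    Real.rpow_le_rpow (by positivity) (by linarith) (by positivity)
  have h2 : halfPow (n + 2) = ((n : ℝ) + 2) * ((n : ℝ) + 2) ^ ((n : ℝ) / 2) := by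
    unfold halfPow
    push_cast
    rw [show ((n : ℝ) + 2) / 2 = 1 + (n : ℝ) / 2 by ring, Real.rpow_add (by positivity),
      Real.rpow_one]
  rw [h2]
  have := halfPow_nonneg n
  gcongr
  linarith

/-- The inequality `r ^ n ≤ n ^ (n / 2) exp (r² / 2)`. -/
lemma pow_le_halfPow_mul_exp {r : ℝ} (hr : 0 ≤ r) (n : ℕ) :
    r ^ n ≤ halfPow n * Real.exp (r ^ 2 / 2) := by
  rcases Nat.eq_zero_or_pos n with rfl | hn
  · simp only [pow_zero, halfPow, Nat.cast_zero, zero_div, Real.rpow_zero, one_mul]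
    exact Real.one_le_exp (by positivity)
  rcases hr.eq_or_lt with rfl | hr
  · rw [zero_pow hn.ne']
    exact mul_nonneg (halfPow_nonneg _) (Real.exp_pos _).le
  have hn' : (0 : ℝ) < n := by positivity
  rw [halfPow_eq_exp hn.ne', ← Real.exp_add, ← Real.exp_log (pow_pos hr n), Real.exp_le_exp,
    Real.log_pow]
  have h1 : Real.log (r ^ 2 / n) ≤ r ^ 2 / n := (Real.log_le_sub_one_of_pos (by positivity)).trans
    (by linarith)
  rw [Real.log_div (by positivity) hn'.ne', Real.log_pow] at h1
  have h2 : (n : ℝ) / 2 * ((2 : ℕ) * Real.log r - Real.log n) ≤ n / 2 * (r ^ 2 / n) := by gcongr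
  have h3 : (n : ℝ) / 2 * (r ^ 2 / n) = r ^ 2 / 2 := by field_simp
  push_cast at h2
  nlinarith

lemma gaussD_bound_aux (b : ℕ) :
    (∀ (a : ℕ) (y : ℝ), |y| ^ a * |gaussD b y| ≤ 2 ^ b * halfPow (a + b)) ∧
    (∀ (a : ℕ) (y : ℝ), |y| ^ a * |gaussD (b + 1) y| ≤ 2 ^ (b + 1) * halfPow (a + b + 1)) := by
  induction b with
  | zero =>
    have h0 : ∀ (a : ℕ) (y : ℝ), |y| ^ a * Real.exp (-(y ^ 2) / 2) ≤ halfPow a := fun a y => by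
      have h1 := pow_le_halfPow_mul_exp (abs_nonneg y) a
      rw [sq_abs] at h1
      rw [neg_div, Real.exp_neg]
      rwa [← div_eq_mul_inv, div_le_iff₀ (Real.exp_pos _)]
    refine ⟨fun a y => ?_, fun a y => ?_⟩
    · simpa [gaussD] using h0 a y
    · have := h0 (a + 1) y
      simp only [gaussD, abs_neg, abs_mul, Real.abs_exp, zero_add, pow_one, add_zero]
      rw [← mul_assoc, ← pow_succ]
      linarith [halfPow_nonneg (a + 1)]
  | succ b ih =>
    refine ⟨fun a y => by simpa only [add_assoc] using ih.2 a y, fun a y => ?_⟩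
    have h1 := ih.2 (a + 1) y
    have h2 := ih.1 a y
    have h3 : |gaussD (b + 2) y| ≤ |y| * |gaussD (b + 1) y| + (b + 1) * |gaussD b y| := by
      simp only [gaussD, abs_neg]
      refine (abs_add_le _ _).trans (le_of_eq ?_)
      rw [abs_mul, abs_mul, abs_of_nonneg (by positivity : (0 : ℝ) ≤ b + 1)]
    have h4 := halfPow_succ_mul (a + b)
    have e1 : a + 1 + b + 1 = a + b + 2 := by ring
    have e2 : a + (b + 1) + 1 = a + b + 2 := by ring
    rw [e1] at h1
    rw [e2]
    push_cast at h4
    have h5 : ((b : ℝ) + 1) * (|y| ^ a * |gaussD b y|) ≤ 2 ^ b * halfPow (a + b + 2) := by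
      calc ((b : ℝ) + 1) * (|y| ^ a * |gaussD b y|)
          ≤ ((a : ℝ) + b + 1) * (2 ^ b * halfPow (a + b)) := by
            gcongr
            have : (0 : ℝ) ≤ a := by positivity
            linarith
        _ = 2 ^ b * (((a : ℝ) + b + 1) * halfPow (a + b)) := by ring
        _ ≤ _ := by gcongr
    calc |y| ^ a * |gaussD (b + 2) y|
        ≤ |y| ^ a * (|y| * |gaussD (b + 1) y| + (b + 1) * |gaussD b y|) := by gcongr
      _ = |y| ^ (a + 1) * |gaussD (b + 1) y| + (b + 1) * (|y| ^ a * |gaussD b y|) := by ring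
      _ ≤ 2 ^ (b + 1) * halfPow (a + b + 2) + 2 ^ b * halfPow (a + b + 2) := add_le_add h1 h5
      _ ≤ 2 ^ (b + 1 + 1) * halfPow (a + b + 2) := by
        have : 0 ≤ (2 : ℝ) ^ b * halfPow (a + b + 2) := mul_nonneg (by positivity) (halfPow_nonneg _)
        rw [pow_succ 2 (b + 1), pow_succ 2 b]
        linarith

lemma gaussD_bound (a b : ℕ) (y : ℝ) : |y| ^ a * |gaussD b y| ≤ 2 ^ b * halfPow (a + b) :=
  (gaussD_bound_aux b).1 a y

/-! ### The extremal function -/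

section Extremal

variable {Q : ℕ → ℝ}

/-- The coefficient `2^{-k} Q_k / x_k^k`, where `x_k = Q_{k+1} / Q_k`. -/
noncomputable def coef (Q : ℕ → ℝ) (k : ℕ) : ℝ := (1 / 2) ^ k * (Q k / quot Q k ^ k)

/-- The `b`-th derivative of the extremal function `∑ c_k exp (-(x - x_k)² / 2)`. -/
noncomputable def extremal (Q : ℕ → ℝ) (b : ℕ) (x : ℝ) : ℝ := ∑' k, coef Q k * gaussD b (x - quot Q k)

lemma coef_pos (hp : ∀ p, 0 < Q p) (k : ℕ) : 0 < coef Q k :=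
  mul_pos (by positivity) (div_pos (hp k) (pow_pos (quot_pos hp k) _))

lemma coef_mul_pow_le (hp : ∀ p, 0 < Q p) (hl : ∀ p, Q (p + 1) ^ 2 ≤ Q p * Q (p + 2)) (k i : ℕ) :
    coef Q k * quot Q k ^ i ≤ (1 / 2) ^ k * Q i := by
  unfold coef
  have hx := pow_pos (quot_pos hp k) k
  rw [mul_assoc]
  gcongr
  rw [div_mul_eq_mul_div, div_le_iff₀ hx]
  exact quot_extremal hp hl k i

lemma abs_gaussD_le (b : ℕ) (y : ℝ) : |gaussD b y| ≤ 2 ^ b * halfPow b := by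
  simpa using gaussD_bound 0 b y

lemma extremal_term_le (hp : ∀ p, 0 < Q p) (hl : ∀ p, Q (p + 1) ^ 2 ≤ Q p * Q (p + 2))
    (b k : ℕ) (x : ℝ) : ‖coef Q k * gaussD b (x - quot Q k)‖ ≤
      (1 / 2) ^ k * (Q 0 * (2 ^ b * halfPow b)) := by
  rw [Real.norm_eq_abs, abs_mul, abs_of_pos (coef_pos hp k), ← mul_assoc]
  have h1 := coef_mul_pow_le hp hl k 0
  rw [pow_zero, mul_one] at h1
  have := hp 0
  gcongr
  exact abs_gaussD_le b _

lemma summable_half (c : ℝ) : Summable fun k : ℕ => (1 / 2 : ℝ) ^ k * c :=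
  (summable_geometric_of_lt_one (by norm_num) (by norm_num)).mul_right _

lemma extremal_summable (hp : ∀ p, 0 < Q p) (hl : ∀ p, Q (p + 1) ^ 2 ≤ Q p * Q (p + 2))
    (b : ℕ) (x : ℝ) : Summable fun k => coef Q k * gaussD b (x - quot Q k) :=
  Summable.of_norm_bounded (summable_half _) fun k => extremal_term_le hp hl b k x

lemma extremal_hasDerivAt (hp : ∀ p, 0 < Q p) (hl : ∀ p, Q (p + 1) ^ 2 ≤ Q p * Q (p + 2))
    (b : ℕ) (x : ℝ) : HasDerivAt (extremal Q b) (extremal Q (b + 1) x) x := by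
  refine hasDerivAt_tsum (summable_half _) (fun k y => ?_)
    (fun k y => extremal_term_le hp hl (b + 1) k y) (extremal_summable hp hl b 0) x
  have h := (gaussD_hasDerivAt b (y - quot Q k)).comp_sub_const y (quot Q k)
  exact h.const_mul _

lemma extremal_iteratedDeriv (hp : ∀ p, 0 < Q p) (hl : ∀ p, Q (p + 1) ^ 2 ≤ Q p * Q (p + 2))
    (b : ℕ) : iteratedDeriv b (extremal Q 0) = extremal Q b := by
  induction b with
  | zero => exact iteratedDeriv_zero
  | succ b ih =>
    rw [iteratedDeriv_succ, ih]
    exact funext fun x => (extremal_hasDerivAt hp hl b x).deriv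

lemma extremal_contDiff (hp : ∀ p, 0 < Q p) (hl : ∀ p, Q (p + 1) ^ 2 ≤ Q p * Q (p + 2)) :
    ContDiff ℝ (⊤ : ℕ∞) (extremal Q 0) := by
  refine contDiff_of_differentiable_iteratedDeriv fun m _ => ?_
  rw [extremal_iteratedDeriv hp hl]
  exact fun x => (extremal_hasDerivAt hp hl m x).differentiableAt

lemma extremal_lower (hp : ∀ p, 0 < Q p) (hl : ∀ p, Q (p + 1) ^ 2 ≤ Q p * Q (p + 2)) (p : ℕ) :
    (1 / 2) ^ p * Q p ≤ quot Q p ^ p * extremal Q 0 (quot Q p) := by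
  have hx := pow_pos (quot_pos hp p) p
  have h1 : coef Q p ≤ extremal Q 0 (quot Q p) := by
    have := (extremal_summable hp hl 0 (quot Q p)).le_tsum p
      (fun j _ => mul_nonneg (coef_pos hp j).le (Real.exp_pos _).le)
    simpa [gaussD, extremal] using this
  calc (1 / 2) ^ p * Q p = quot Q p ^ p * coef Q p := by unfold coef; field_simp
    _ ≤ _ := by gcongr

lemma extremal_upper (hp : ∀ p, 0 < Q p) (hl : ∀ p, Q (p + 1) ^ 2 ≤ Q p * Q (p + 2))
    (h12 : cond12L2Rseq Q) : ∃ C > 0, ∃ h > 0, ∀ (a b : ℕ) (x : ℝ),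
      |x ^ a * extremal Q b x| ≤ C * h ^ (a + b) * Q (a + b) := by
  obtain ⟨B, hB, C, hC, H, hH, h12⟩ := h12
  -- enlarging the constant `C` to be at least `1` makes `C ^ n` monotone in `n`
  set C' := max C 1 with hC'
  have hC1 : 1 ≤ C' := le_max_right _ _
  refine ⟨2 * B, by positivity, 4 * C' * H, by positivity, fun a b x => ?_⟩
  have hQ := hp (a + b)
  have key : ∀ k, ‖x ^ a * (coef Q k * gaussD b (x - quot Q k))‖ ≤
      (1 / 2) ^ k * (B * (4 * C' * H) ^ (a + b) * Q (a + b)) := by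
    intro k
    set z := quot Q k
    have hz : 0 < z := quot_pos hp k
    have hc := coef_pos hp k
    have hx : |x| ^ a ≤ ∑ i ∈ Finset.range (a + 1), z ^ i * |x - z| ^ (a - i) * (a.choose i) := by
      rw [← add_pow]
      gcongr
      calc |x| = |z + (x - z)| := by ring_nf
        _ ≤ |z| + |x - z| := abs_add_le _ _
        _ = z + |x - z| := by rw [abs_of_pos hz]
    calc ‖x ^ a * (coef Q k * gaussD b (x - z))‖
        = |x| ^ a * (coef Q k * |gaussD b (x - z)|) := by
          rw [Real.norm_eq_abs, abs_mul, abs_mul, abs_pow, abs_of_pos hc]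
      _ ≤ (∑ i ∈ Finset.range (a + 1), z ^ i * |x - z| ^ (a - i) * (a.choose i)) *
            (coef Q k * |gaussD b (x - z)|) := by gcongr
      _ = ∑ i ∈ Finset.range (a + 1), (a.choose i) * ((coef Q k * z ^ i) *
            (|x - z| ^ (a - i) * |gaussD b (x - z)|)) := by
          rw [Finset.sum_mul]
          exact Finset.sum_congr rfl fun i _ => by ring
      _ ≤ ∑ i ∈ Finset.range (a + 1), (a.choose i) *
            ((1 / 2) ^ k * 2 ^ b * (B * C' ^ (a + b) * H ^ (a + b) * Q (a + b))) := by
          refine Finset.sum_le_sum fun i hi => ?_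
          have hia : i ≤ a := Nat.lt_succ_iff.mp (Finset.mem_range.mp hi)
          have h1 := coef_mul_pow_le hp hl k i
          have h2 := gaussD_bound (a - i) b (x - z)
          have h3 := h12 (a - i + b) i
          rw [show a - i + b + i = a + b by omega] at h3
          have h4 : C ^ (a - i + b) ≤ C' ^ (a + b) :=
            (pow_le_pow_left₀ hC.le (le_max_left _ _) _).trans
              (pow_le_pow_right₀ hC1 (by omega))
          have h5 : 0 ≤ |x - z| ^ (a - i) * |gaussD b (x - z)| := by positivity
          have h6 := hp i
          refine mul_le_mul_of_nonneg_left ?_ (Nat.cast_nonneg _)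
          calc coef Q k * z ^ i * (|x - z| ^ (a - i) * |gaussD b (x - z)|)
              ≤ ((1 / 2) ^ k * Q i) * (2 ^ b * halfPow (a - i + b)) :=
                mul_le_mul h1 h2 h5 (by positivity)
            _ = (1 / 2) ^ k * 2 ^ b * (halfPow (a - i + b) * Q i) := by ring
            _ ≤ (1 / 2) ^ k * 2 ^ b * (B * C ^ (a - i + b) * H ^ (a + b) * Q (a + b)) := by
                exact mul_le_mul_of_nonneg_left h3 (by positivity)
            _ ≤ _ := by gcongr
      _ = 2 ^ a * ((1 / 2) ^ k * 2 ^ b * (B * C' ^ (a + b) * H ^ (a + b) * Q (a + b))) := by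
          rw [← Finset.sum_mul]
          congr 1
          exact_mod_cast Nat.sum_range_choose a
      _ = (1 / 2) ^ k * (B * (2 * C' * H) ^ (a + b) * Q (a + b)) := by
          rw [mul_pow, mul_pow, pow_add 2 a b]; ring
      _ ≤ _ := by
          gcongr
          norm_num
  have h1 := tsum_of_norm_bounded ((hasSum_geometric_of_lt_one (by norm_num : (0 : ℝ) ≤ 1 / 2)
    (by norm_num)).mul_right _) key
  rw [tsum_mul_left, Real.norm_eq_abs] at h1
  refine h1.trans (le_of_eq ?_)
  norm_num
  ring

end Extremal

/-! ### Comparison of sequences through the function classes in dimension one -/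

lemma mderiv_one (b : Fin 1 → ℕ) (f : (Fin 1 → ℝ) → ℝ) :
    mderiv b f = (pderivOp 0)^[b 0] f := by
  simp [mderiv, List.finRange_succ]

lemma iterate_pderivOp {F : ℕ → ℝ → ℝ} (hF : ∀ b x, HasDerivAt (F b) (F (b + 1) x) x) (b : ℕ) :
    (pderivOp (0 : Fin 1))^[b] (fun x => F 0 (x 0)) = fun x => F b (x 0) := by
  induction b with
  | zero => rfl
  | succ b ih =>
    rw [Function.iterate_succ_apply', ih]
    funext x
    have h1 : HasFDerivAt (fun x : Fin 1 → ℝ => x 0)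
      (ContinuousLinearMap.proj (R := ℝ) (φ := fun _ : Fin 1 => ℝ) 0) x :=
      (ContinuousLinearMap.proj (R := ℝ) (φ := fun _ : Fin 1 => ℝ) 0).hasFDerivAt
    have h2 := (hF b (x 0)).comp_hasFDerivAt x h1
    have h3 : fderiv ℝ (fun x : Fin 1 → ℝ => F b (x 0)) x = _ := h2.fderiv
    unfold pderivOp
    rw [h3]
    simp

lemma extremal_mem {Q : ℕ → ℝ} (hp : ∀ p, 0 < Q p)
    (hl : ∀ p, Q (p + 1) ^ 2 ≤ Q p * Q (p + 2)) (h12 : cond12L2Rseq Q) :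
    (fun x : Fin 1 → ℝ => extremal Q 0 (x 0)) ∈ SRoumieuSeq Q 1 := by
  refine ⟨(extremal_contDiff hp hl).comp (contDiff_apply ℝ ℝ 0), ?_⟩
  obtain ⟨C, hC, h, hh, H⟩ := extremal_upper hp hl h12
  refine ⟨C, hC, h, hh, fun α β x => ?_⟩
  rw [mderiv_one, iterate_pderivOp (extremal_hasDerivAt hp hl)]
  simpa [mpow, msize] using H (α 0) (β 0) (x 0)

/-- An inclusion of the classes in dimension one forces domination of the sequences up to a
geometric factor. -/
lemma seq_compare {Q P : ℕ → ℝ} (hp : ∀ p, 0 < Q p)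
    (hl : ∀ p, Q (p + 1) ^ 2 ≤ Q p * Q (p + 2)) (h12 : cond12L2Rseq Q)
    (hsub : SRoumieuSeq Q 1 ⊆ SRoumieuSeq P 1) :
    ∃ C > 0, ∃ h > 0, ∀ p, Q p ≤ C * h ^ p * P p := by
  obtain ⟨-, C, hC, h, hh, H⟩ := hsub (extremal_mem hp hl h12)
  refine ⟨C, hC, 2 * h, by positivity, fun p => ?_⟩
  have h1 := H (fun _ => p) (fun _ => 0) (fun _ => quot Q p)
  rw [mderiv_one] at h1
  simp only [mpow, msize, Finset.univ_unique, Finset.prod_singleton, Finset.sum_singleton,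
    Function.iterate_zero, id, add_zero] at h1
  have h2 := (extremal_lower hp hl p).trans ((le_abs_self _).trans h1)
  calc Q p = 2 ^ p * ((1 / 2) ^ p * Q p) := by
        rw [← mul_assoc, ← mul_pow]; norm_num
    _ ≤ 2 ^ p * (C * h ^ p * P p) := by gcongr
    _ = _ := by rw [mul_pow]; ring

/-! ### Young conjugates and the weights they define -/

section Young

variable {ω : ℝ → ℝ}

lemma youngConj_bddAbove (hω : IsGenWeightFun ω) (s : ℝ) :
    BddAbove {y : ℝ | ∃ t : ℝ, 0 ≤ t ∧ y = s * t - ω (Real.exp t)} := by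
  have h1 : ∀ᶠ t in atTop, ‖Real.log (Real.exp t)‖ ≤ (|s| + 1)⁻¹ * ‖ω (Real.exp t)‖ :=
    Real.tendsto_exp_atTop.eventually (hω.gamma.bound (by positivity))
  obtain ⟨T, hT⟩ := eventually_atTop.mp h1
  refine ⟨|s| * |T|, ?_⟩
  rintro y ⟨t, ht, rfl⟩
  have h0 := hω.nonneg _ (Real.exp_pos t).le
  have h2 : s * t ≤ |s| * t := mul_le_mul_of_nonneg_right (le_abs_self s) ht
  rcases le_total T t with h | h
  · have h3 := hT t h
    rw [Real.log_exp, Real.norm_eq_abs, Real.norm_eq_abs, abs_of_nonneg ht, abs_of_nonneg h0,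
      inv_mul_eq_div, le_div_iff₀ (by positivity)] at h3
    have : 0 ≤ |s| * |T| := by positivity
    nlinarith
  · have : |s| * t ≤ |s| * |T| := by
      gcongr
      exact h.trans (le_abs_self T)
    linarith

lemma le_youngConj (hω : IsGenWeightFun ω) {l : ℝ} (hl : 0 < l) (k : ℕ) {t : ℝ} (ht : 0 ≤ t) :
    k * t - ω (Real.exp t) / l ≤ 1 / l * youngConj ω (l * k) := by
  have : l * k * t - ω (Real.exp t) ≤ youngConj ω (l * k) :=
    le_csSup (youngConj_bddAbove hω _) ⟨t, ht, rfl⟩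
  rw [one_div, inv_mul_eq_div, le_div_iff₀ hl, sub_mul, div_mul_cancel₀ _ hl.ne']
  linarith

lemma youngConj_le {l : ℝ} (hl : 0 < l) (k : ℕ) {K : ℝ}
    (h : ∀ t, 0 ≤ t → k * t - ω (Real.exp t) / l ≤ K) :
    1 / l * youngConj ω (l * k) ≤ K := by
  rw [one_div, inv_mul_eq_div, div_le_iff₀ hl]
  refine csSup_le ⟨_, 0, le_rfl, rfl⟩ ?_
  rintro y ⟨t, ht, rfl⟩
  have := mul_le_mul_of_nonneg_right (h t ht) hl.le
  rw [sub_mul, div_mul_cancel₀ _ hl.ne'] at this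
  linarith

lemma alpha_iterate (hω : IsGenWeightFun ω) (n : ℕ) :
    ∃ L : ℝ, 1 ≤ L ∧ ∀ t, 0 ≤ t → ω (2 ^ n * t) ≤ L * (ω t + 1) := by
  obtain ⟨L, hL, h⟩ := hω.alpha
  induction n with
  | zero => exact ⟨1, le_rfl, fun t _ => by simp⟩
  | succ n ih =>
    obtain ⟨L', hL', h'⟩ := ih
    refine ⟨L * (L' + 1), by nlinarith, fun t ht => ?_⟩
    have h1 := h (2 ^ n * t) (by positivity)
    have h2 := h' t ht
    have h3 := hω.nonneg t ht
    rw [← mul_assoc, ← pow_succ'] at h1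
    calc ω (2 ^ (n + 1) * t) ≤ L * (ω (2 ^ n * t) + 1) := h1
      _ ≤ L * ((L' + 1) * (ω t + 1)) := by gcongr; linarith
      _ = _ := by ring

lemma omega6_iterate (h6 : condOmega6 ω) (n : ℕ) :
    ∃ H : ℝ, 1 ≤ H ∧ ∃ K : ℝ, 0 ≤ K ∧ ∀ t, 0 ≤ t → 2 ^ n * ω t ≤ ω (H * t) + K := by
  obtain ⟨H, hH, h⟩ := h6
  induction n with
  | zero => exact ⟨1, le_rfl, 0, le_rfl, fun t _ => by simp⟩
  | succ n ih =>
    obtain ⟨H', hH', K, hK, h'⟩ := ih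
    refine ⟨H * H', by nlinarith, H + 2 * K, by linarith, fun t ht => ?_⟩
    have h1 := h (H' * t) (by positivity)
    have h2 := h' t ht
    rw [← mul_assoc] at h1
    rw [pow_succ]
    linarith

/-- Condition (α) absorbs geometric factors into a change of the parameter. -/
lemma weight_absorb (hω : IsGenWeightFun ω) {h : ℝ} (hh : 0 < h) :
    ∃ l > 0, ∃ C > 0, ∀ k : ℕ, h ^ k * wSeq ω 1 k ≤ C * wWeight ω l k := by
  obtain ⟨n, hn⟩ := pow_unbounded_of_one_lt h (one_lt_two)
  obtain ⟨L, hL, hα⟩ := alpha_iterate hω n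
  have hL0 : 0 < L := by linarith
  refine ⟨L, hL0, Real.exp 1, Real.exp_pos _, fun k => ?_⟩
  have hlog : 0 ≤ (n : ℝ) * Real.log 2 := mul_nonneg (Nat.cast_nonneg _) (Real.log_nonneg one_le_two)
  have h2 : Real.exp (n * Real.log 2) = 2 ^ n := by
    rw [Real.exp_nat_mul, Real.exp_log two_pos]
  have key : 1 / 1 * youngConj ω (1 * k) ≤
      1 + 1 / L * youngConj ω (L * k) - k * (n * Real.log 2) := by
    refine youngConj_le one_pos k fun t ht => ?_
    have h3 := le_youngConj hω hL0 k (add_nonneg hlog ht)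
    have h4 := hα (Real.exp t) (Real.exp_pos t).le
    rw [Real.exp_add, h2] at h3
    have h5 : ω (2 ^ n * Real.exp t) / L ≤ ω (Real.exp t) + 1 := by
      rw [div_le_iff₀ hL0]; linarith
    rw [div_one]
    linarith
  calc h ^ k * wSeq ω 1 k ≤ (2 ^ n) ^ k * wSeq ω 1 k := by
        gcongr
        exact (Real.exp_pos _).le
    _ = Real.exp (k * (n * Real.log 2) + 1 / 1 * youngConj ω (1 * k)) := by
        rw [Real.exp_add, Real.exp_nat_mul, h2]; rfl
    _ ≤ Real.exp (1 + 1 / L * youngConj ω (L * k)) := by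
        rw [Real.exp_le_exp]; linarith
    _ = _ := by rw [Real.exp_add]; rfl

/-- Condition (ω6) turns a change of the parameter into a geometric factor. -/
lemma weight_release (hω : IsGenWeightFun ω) (h6 : condOmega6 ω) {l : ℝ} (hl : 0 < l) :
    ∃ h > 0, ∃ C > 0, ∀ k : ℕ, wWeight ω l k ≤ C * h ^ k * wSeq ω 1 k := by
  obtain ⟨n, hn⟩ := pow_unbounded_of_one_lt l (one_lt_two)
  obtain ⟨H, hH, K, hK, h6⟩ := omega6_iterate h6 n
  have hH0 : 0 < H := by linarith
  have hlog := Real.log_nonneg hH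
  have hω1 := hω.nonneg 1 zero_le_one
  refine ⟨H, hH0, Real.exp (K + ω 1), Real.exp_pos _, fun k => ?_⟩
  have key : 1 / l * youngConj ω (l * k) ≤
      K + ω 1 + k * Real.log H + 1 / 1 * youngConj ω (1 * k) := by
    refine youngConj_le hl k fun t ht => ?_
    have h0 := hω.nonneg _ (Real.exp_pos t).le
    rcases le_total (Real.log H) t with h | h
    · have h3 := le_youngConj hω one_pos k (sub_nonneg.mpr h)
      have h4 := h6 (Real.exp (t - Real.log H)) (Real.exp_pos _).le
      have h5 : H * Real.exp (t - Real.log H) = Real.exp t := by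
        rw [Real.exp_sub, Real.exp_log hH0]; field_simp
      rw [h5] at h4
      have h2n : (1 : ℝ) ≤ 2 ^ n := one_le_pow₀ one_le_two
      have h6 : ω (Real.exp (t - Real.log H)) ≤ ω (Real.exp t) / l + K := by
        have : ω (Real.exp (t - Real.log H)) ≤ (ω (Real.exp t) + K) / 2 ^ n := by
          rw [le_div_iff₀ (by positivity)]; linarith
        refine this.trans ?_
        rw [add_div]
        gcongr
        exact div_le_self hK h2n
      rw [div_one] at h3
      linarith
    · have h3 := le_youngConj hω one_pos k le_rfl
      rw [Real.exp_zero] at h3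
      have h4 : (k : ℝ) * t ≤ k * Real.log H := by gcongr
      have h5 : 0 ≤ ω (Real.exp t) / l := by positivity
      rw [div_one] at h3
      linarith
  calc wWeight ω l k ≤ Real.exp (K + ω 1 + k * Real.log H + 1 / 1 * youngConj ω (1 * k)) :=
        Real.exp_le_exp.mpr key
    _ = _ := by
        rw [Real.exp_add, Real.exp_add, Real.exp_nat_mul, Real.exp_log hH0]; rfl

lemma SRoumieuW_eq_seq (hω : IsGenWeightFun ω) (h6 : condOmega6 ω) (d : ℕ) :
    SRoumieuW ω d = SRoumieuSeq (wSeq ω 1) d := by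
  ext f
  constructor
  · rintro ⟨hf, l, hl, C, hC, H⟩
    obtain ⟨h, hh, C', hC', H'⟩ := weight_release hω h6 hl
    refine ⟨hf, C * C', by positivity, h, hh, fun α β x => (H α β x).trans ?_⟩
    calc _ ≤ C * (C' * h ^ (msize α + msize β) * wSeq ω 1 (msize α + msize β)) := by
          gcongr
          exact H' _
      _ = _ := by ring
  · rintro ⟨hf, C, hC, h, hh, H⟩
    obtain ⟨l, hl, C', hC', H'⟩ := weight_absorb hω hh
    refine ⟨hf, l, hl, C * C', by positivity, fun α β x => (H α β x).trans ?_⟩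
    rw [mul_assoc, mul_assoc]
    exact mul_le_mul_of_nonneg_left (H' _) hC.le

lemma wSeq_pos (p : ℕ) : 0 < wSeq ω 1 p := Real.exp_pos _

lemma wSeq_logConvex (hω : IsGenWeightFun ω) (p : ℕ) :
    wSeq ω 1 (p + 1) ^ 2 ≤ wSeq ω 1 p * wSeq ω 1 (p + 2) := by
  unfold wSeq
  rw [← Real.exp_nat_mul, ← Real.exp_add, Real.exp_le_exp]
  have := youngConj_le (ω := ω) one_pos (p + 1) (K := (1 / 1 * youngConj ω (1 * (p : ℕ)) +
    1 / 1 * youngConj ω (1 * (p + 2 : ℕ))) / 2) fun t ht => by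
      have h1 := le_youngConj hω one_pos p ht
      have h2 := le_youngConj hω one_pos (p + 2) ht
      push_cast at h1 h2 ⊢
      linarith
  push_cast at this ⊢
  linarith

lemma wSeq_modGrowth (hω : IsGenWeightFun ω) (h6 : condOmega6 ω) :
    ∃ C > 0, ∃ h > 0, ∀ p q : ℕ,
      wSeq ω 1 (p + q) ≤ C * h ^ (p + q) * (wSeq ω 1 p * wSeq ω 1 q) := by
  obtain ⟨H, hH, h6⟩ := h6
  have hH0 : 0 < H := by linarith
  have hlog := Real.log_nonneg hH
  have hω1 := hω.nonneg 1 zero_le_one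
  refine ⟨Real.exp (H + 2 * ω 1), Real.exp_pos _, H, hH0, fun p q => ?_⟩
  have key : 1 / 1 * youngConj ω (1 * (p + q : ℕ)) ≤ H + 2 * ω 1 + (p + q : ℕ) * Real.log H +
      (1 / 1 * youngConj ω (1 * p) + 1 / 1 * youngConj ω (1 * q)) := by
    refine youngConj_le one_pos (p + q) fun t ht => ?_
    have h0 := hω.nonneg _ (Real.exp_pos t).le
    rw [div_one]
    rcases le_total (Real.log H) t with h | h
    · have h1 := le_youngConj hω one_pos p (sub_nonneg.mpr h)
      have h2 := le_youngConj hω one_pos q (sub_nonneg.mpr h)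
      have h4 := h6 (Real.exp (t - Real.log H)) (Real.exp_pos _).le
      have h5 : H * Real.exp (t - Real.log H) = Real.exp t := by
        rw [Real.exp_sub, Real.exp_log hH0]; field_simp
      rw [h5] at h4
      rw [div_one] at h1 h2
      push_cast
      linarith
    · have h1 := le_youngConj hω one_pos p le_rfl
      have h2 := le_youngConj hω one_pos q le_rfl
      rw [Real.exp_zero, div_one] at h1 h2
      have h4 : ((p + q : ℕ) : ℝ) * t ≤ (p + q : ℕ) * Real.log H := by gcongr
      linarith
  unfold wSeq
  calc _ ≤ _ := Real.exp_le_exp.mpr key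
    _ = _ := by
      rw [Real.exp_add, Real.exp_add _ (_ * Real.log H), Real.exp_nat_mul, Real.exp_log hH0,
        Real.exp_add (1 / 1 * _)]

/-- Condition (β) yields (12L2R) for `wSeq ω 1`, by testing the Young conjugate at
`t = log √p`. -/
lemma wSeq_12L2R (hω : IsWeightFun ω) : cond12L2Rseq (wSeq ω 1) := by
  have hg := hω.toIsGenWeightFun
  obtain ⟨c, hc, hb⟩ := hω.beta.exists_pos
  rw [isBigOWith_iff] at hb
  obtain ⟨T, hT⟩ := eventually_atTop.mp hb
  set A := c + ω (max T 0) with hA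
  have hm := hg.nonneg (max T 0) (le_max_right _ _)
  have hA0 : 0 < A := by positivity
  have bound : ∀ t, 0 ≤ t → ω t ≤ A * t ^ 2 + A := fun t ht => by
    rcases le_total T t with h | h
    · have := hT t h
      rw [Real.norm_eq_abs, Real.norm_eq_abs, abs_of_nonneg (hg.nonneg t ht),
        abs_of_nonneg (sq_nonneg t)] at this
      nlinarith [sq_nonneg t]
    · have : ω t ≤ ω (max T 0) :=
        hg.mono (Set.mem_Ici.mpr ht) (Set.mem_Ici.mpr (le_max_right _ _)) (h.trans (le_max_left _ _))
      nlinarith [sq_nonneg t]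
  refine ⟨Real.exp A, Real.exp_pos _, Real.exp A, Real.exp_pos _, 1, one_pos, fun p q => ?_⟩
  change halfPow p * wSeq ω 1 q ≤ _
  rcases Nat.eq_zero_or_pos p with rfl | hp
  · simp only [halfPow, Nat.cast_zero, zero_div, Real.rpow_zero, one_mul, pow_zero, mul_one,
      zero_add, one_pow]
    exact le_mul_of_one_le_left (wSeq_pos q).le (Real.one_le_exp hA0.le)
  have hp' : (0 : ℝ) < p := by positivity
  have hlog : 0 ≤ Real.log p / 2 :=
    div_nonneg (Real.log_nonneg (by exact_mod_cast hp)) two_pos.le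
  have key : 1 / 1 * youngConj ω (1 * q) ≤ A + p * A + 1 / 1 * youngConj ω (1 * (p + q : ℕ))
      - p / 2 * Real.log p := by
    refine youngConj_le one_pos q fun t ht => ?_
    have h0 := hg.nonneg _ (Real.exp_pos t).le
    rw [div_one]
    rcases le_total (Real.log p / 2) t with h | h
    · have h1 := le_youngConj hg one_pos (p + q) ht
      have h2 : (p : ℝ) * (Real.log p / 2) ≤ p * t := by gcongr
      rw [div_one] at h1
      push_cast at h1 ⊢
      have : 0 < (p : ℝ) * A := by positivity
      linarith
    · have h1 := le_youngConj hg one_pos (p + q) hlog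
      have h2 : (q : ℝ) * t ≤ q * (Real.log p / 2) := by gcongr
      have h3 := bound (Real.exp (Real.log p / 2)) (Real.exp_pos _).le
      have h4 : Real.exp (Real.log p / 2) ^ 2 = p := by
        rw [← Real.exp_nat_mul, Nat.cast_two, mul_div_cancel₀ _ two_ne_zero, Real.exp_log hp']
      rw [h4] at h3
      rw [div_one] at h1
      push_cast at h1 ⊢
      linarith
  rw [halfPow_eq_exp hp.ne', one_pow, mul_one]
  unfold wSeq
  rw [← Real.exp_nat_mul, ← Real.exp_add, ← Real.exp_add, ← Real.exp_add, Real.exp_le_exp]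
  linarith

end Young

/-! ### The associated function of a sequence -/

section Assoc

variable {M : ℕ → ℝ}

lemma one_le_quot (hM : IsLC M) (k : ℕ) : 1 ≤ quot M k := by
  refine le_trans ?_ (quot_mono hM.pos hM.logConvex (Nat.zero_le k))
  simpa [quot, hM.norm0] using hM.norm1

lemma one_le_of_LC (hM : IsLC M) (p : ℕ) : 1 ≤ M p := by
  induction p with
  | zero => exact hM.norm0.ge
  | succ p ih =>
    have h1 := one_le_quot hM p
    unfold quot at h1
    rw [le_div_iff₀ (hM.pos p)] at h1
    linarith

/-- Condition (12L2R) with `q = 0` bounds all terms of the supremum defining `ω_M (t)` by a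
quadratic function of `t`. -/
lemma log_term_le (hM : IsLC M) (h12 : cond12L2Rseq M) :
    ∃ A > 0, ∀ t, 0 ≤ t → ∀ p : ℕ, Real.log (t ^ p / M p) ≤ A + A * t ^ 2 := by
  obtain ⟨B, hB, C, hC, H, hH, h12⟩ := h12
  set A := |Real.log B| + (C * H) ^ 2 / 2 with hA
  have hA0 : 0 < A := by positivity
  refine ⟨A, hA0, fun t ht p => ?_⟩
  rcases (div_nonneg (pow_nonneg ht p) (hM.pos p).le).eq_or_lt with h0 | h0
  · rw [← h0, Real.log_zero]; positivity
  have h1 := pow_le_halfPow_mul_exp (by positivity : 0 ≤ C * H * t) p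
  have h2 : halfPow p ≤ B * (C * H) ^ p * M p := by
    have := h12 p 0
    rw [hM.norm0, mul_one, add_zero] at this
    rw [mul_pow, ← mul_assoc]
    exact this
  have h3 : t ^ p / M p ≤ B * Real.exp ((C * H * t) ^ 2 / 2) := by
    rw [div_le_iff₀ (hM.pos p)]
    have h4 : (C * H) ^ p * t ^ p ≤ (C * H) ^ p * (B * Real.exp ((C * H * t) ^ 2 / 2) * M p) := by
      calc (C * H) ^ p * t ^ p = (C * H * t) ^ p := (mul_pow _ _ _).symm
        _ ≤ _ := h1
        _ ≤ B * (C * H) ^ p * M p * Real.exp ((C * H * t) ^ 2 / 2) := by gcongr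
        _ = _ := by ring
    exact le_of_mul_le_mul_left h4 (by positivity)
  have h5 := Real.log_le_log h0 h3
  rw [Real.log_mul hB.ne' (Real.exp_pos _).ne', Real.log_exp] at h5
  have h6 := le_abs_self (Real.log B)
  have h7 : 0 ≤ |Real.log B| * t ^ 2 := by positivity
  have h8 : 0 ≤ (C * H) ^ 2 / 2 := by positivity
  rw [hA]
  nlinarith

lemma assoc_bddAbove (hM : IsLC M) (h12 : cond12L2Rseq M) {t : ℝ} (ht : 0 ≤ t) :
    BddAbove {y : ℝ | ∃ p : ℕ, y = Real.log (t ^ p / M p)} := by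
  obtain ⟨A, -, h⟩ := log_term_le hM h12
  refine ⟨A + A * t ^ 2, ?_⟩
  rintro y ⟨p, rfl⟩
  exact h t ht p

lemma le_assoc (hM : IsLC M) (h12 : cond12L2Rseq M) {t : ℝ} (ht : 0 ≤ t) (p : ℕ) :
    Real.log (t ^ p / M p) ≤ assocFun M t :=
  le_csSup (assoc_bddAbove hM h12 ht) ⟨p, rfl⟩

lemma assoc_le {t K : ℝ} (h : ∀ p : ℕ, Real.log (t ^ p / M p) ≤ K) : assocFun M t ≤ K := by
  refine csSup_le ⟨_, 0, rfl⟩ ?_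
  rintro y ⟨p, rfl⟩
  exact h p

lemma log_term_eq (hM : IsLC M) {t : ℝ} (ht : 0 < t) (p : ℕ) :
    Real.log (t ^ p / M p) = p * Real.log t - Real.log (M p) := by
  rw [Real.log_div (pow_pos ht p).ne' (hM.pos p).ne', Real.log_pow]

lemma assoc_nonneg (hM : IsLC M) (h12 : cond12L2Rseq M) {t : ℝ} (ht : 0 ≤ t) :
    0 ≤ assocFun M t := by
  have := le_assoc hM h12 ht 0
  simpa [hM.norm0] using this

lemma assoc_eq_zero (hM : IsLC M) (h12 : cond12L2Rseq M) {t : ℝ} (ht : 0 ≤ t) (h1 : t ≤ 1) :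
    assocFun M t = 0 := by
  refine le_antisymm (assoc_le fun p => ?_) (assoc_nonneg hM h12 ht)
  exact Real.log_nonpos (div_nonneg (pow_nonneg ht p) (hM.pos p).le)
    (div_le_one_of_le₀ ((pow_le_one₀ ht h1).trans (one_le_of_LC hM p)) (hM.pos p).le)

lemma assoc_mono (hM : IsLC M) (h12 : cond12L2Rseq M) : MonotoneOn (assocFun M) (Set.Ici 0) := by
  intro s hs t ht hst
  rcases (Set.mem_Ici.mp hs).eq_or_lt with h | h
  · rw [← h, assoc_eq_zero hM h12 le_rfl zero_le_one]
    exact assoc_nonneg hM h12 ht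
  · refine assoc_le fun p => le_trans ?_ (le_assoc hM h12 ht p)
    have := hM.pos p
    exact Real.log_le_log (by positivity) (by gcongr)

lemma assoc_convex (hM : IsLC M) (h12 : cond12L2Rseq M) :
    ConvexOn ℝ Set.univ fun t => assocFun M (Real.exp t) := by
  refine ⟨convex_univ, fun x _ y _ a b ha hb hab => assoc_le fun p => ?_⟩
  have hx := le_assoc hM h12 (Real.exp_pos x).le p
  have hy := le_assoc hM h12 (Real.exp_pos y).le p
  rw [log_term_eq hM (Real.exp_pos _), Real.log_exp] at hx hy ⊢
  simp only [smul_eq_mul]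
  have h1 := mul_le_mul_of_nonneg_left hx ha
  have h2 := mul_le_mul_of_nonneg_left hy hb
  have h3 : Real.log (M p) = a * Real.log (M p) + b * Real.log (M p) := by
    rw [← add_mul, hab, one_mul]
  linarith

/-- Away from `0` continuity comes from convexity in `log t`; near `0` the function vanishes. -/
lemma assoc_continuousOn (hM : IsLC M) (h12 : cond12L2Rseq M) :
    ContinuousOn (assocFun M) (Set.Ici 0) := by
  intro t ht
  rcases (Set.mem_Ici.mp ht).eq_or_lt with h | h
  · subst h
    refine (continuousWithinAt_const (b := (0 : ℝ))).congr_of_eventuallyEq ?_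
      (assoc_eq_zero hM h12 le_rfl zero_le_one)
    filter_upwards [self_mem_nhdsWithin, mem_nhdsWithin_of_mem_nhds (Iic_mem_nhds one_pos)]
      with s hs hs1 using assoc_eq_zero hM h12 hs hs1
  · have hc : Continuous fun t => assocFun M (Real.exp t) :=
      continuousOn_univ.mp ((assoc_convex hM h12).continuousOn isOpen_univ)
    have h1 : ContinuousAt (fun s => assocFun M (Real.exp (Real.log s))) t :=
      ContinuousAt.comp (f := Real.log) (g := fun t => assocFun M (Real.exp t))
        hc.continuousAt (Real.continuousAt_log h.ne')
    refine (h1.congr ?_).continuousWithinAt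
    filter_upwards [Ioi_mem_nhds h] with s hs
    rw [Real.exp_log hs]

lemma assoc_gamma (hM : IsLC M) (h12 : cond12L2Rseq M) : Real.log =o[atTop] assocFun M := by
  rw [isLittleO_iff]
  intro ε hε
  obtain ⟨n, hn⟩ := exists_nat_gt (1 / ε)
  have h1 : ∀ᶠ t in atTop, Real.log (M (n + 1)) ≤ Real.log t :=
    Real.tendsto_log_atTop.eventually_ge_atTop _
  filter_upwards [h1, eventually_ge_atTop 1] with t ht ht1
  have h2 := le_assoc hM h12 (zero_le_one.trans ht1) (n + 1)
  rw [log_term_eq hM (by linarith)] at h2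
  have h3 := Real.log_nonneg ht1
  rw [Real.norm_eq_abs, Real.norm_eq_abs, abs_of_nonneg h3,
    abs_of_nonneg (assoc_nonneg hM h12 (zero_le_one.trans ht1))]
  have h4 : n * Real.log t ≤ assocFun M t := by push_cast at h2; linarith
  rw [div_lt_iff₀ hε] at hn
  calc Real.log t ≤ (n * ε) * Real.log t := le_mul_of_one_le_left h3 hn.le
    _ = ε * (n * Real.log t) := by ring
    _ ≤ _ := by gcongr

lemma assoc_beta (hM : IsLC M) (h12 : cond12L2Rseq M) :
    assocFun M =O[atTop] fun t : ℝ => t ^ 2 := by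
  obtain ⟨A, hA, h⟩ := log_term_le hM h12
  refine IsBigO.of_bound (2 * A) ?_
  filter_upwards [eventually_ge_atTop 1] with t ht
  have ht0 : 0 ≤ t := zero_le_one.trans ht
  rw [Real.norm_eq_abs, Real.norm_eq_abs, abs_of_nonneg (assoc_nonneg hM h12 ht0),
    abs_of_nonneg (sq_nonneg t)]
  have h1 : assocFun M t ≤ _ := assoc_le (h t ht0)
  have h2 : A * 1 ≤ A * t ^ 2 := by
    gcongr
    exact one_le_pow₀ ht
  linarith

lemma assoc_isWeightFun (hM : IsLC M) (h12 : cond12L2Rseq M) (hα : condAlpha (assocFun M)) :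
    IsWeightFun (assocFun M) where
  nonneg _ ht := assoc_nonneg hM h12 ht
  continuous := assoc_continuousOn hM h12
  mono := assoc_mono hM h12
  alpha := hα
  gamma := assoc_gamma hM h12
  delta := (assoc_convex hM h12).subset (Set.subset_univ _) (convex_Ici 0)
  beta := assoc_beta hM h12

lemma assoc_omega6 (hM : IsLC M) (h12 : cond12L2Rseq M) (h2 : condM2 M) :
    condOmega6 (assocFun M) := by
  obtain ⟨C, hC, h⟩ := h2
  refine ⟨C, hC, fun t ht => ?_⟩
  rcases ht.eq_or_lt with rfl | ht
  · rw [mul_zero, assoc_eq_zero hM h12 le_rfl zero_le_one]; linarith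
  have hCt : 0 < C * t := by positivity
  suffices assocFun M t ≤ assocFun M (C * t) / 2 by linarith
  refine assoc_le fun p => ?_
  have h1 := le_assoc hM h12 hCt.le (p + p)
  rw [log_term_eq hM hCt, Real.log_mul (by positivity) ht.ne'] at h1
  rw [log_term_eq hM ht]
  have hMp := hM.pos p
  have h3 := Real.log_le_log (hM.pos _) (h p p)
  rw [Real.log_mul (by positivity) hMp.ne', Real.log_mul (by positivity) hMp.ne',
    Real.log_pow] at h3
  push_cast at h1 h3
  linarith

/-- Log-convexity lets `M` be recovered from its associated function. -/
lemma wSeq_assocFun (hM : IsLC M) (h12 : cond12L2Rseq M) (hα : condAlpha (assocFun M)) :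
    wSeq (assocFun M) 1 = M := by
  have hω := (assoc_isWeightFun hM h12 hα).toIsGenWeightFun
  funext p
  unfold wSeq
  rw [← Real.exp_log (hM.pos p)]
  congr 1
  apply le_antisymm
  · refine youngConj_le one_pos p fun t ht => ?_
    have h1 := le_assoc hM h12 (Real.exp_pos t).le p
    rw [log_term_eq hM (Real.exp_pos _), Real.log_exp] at h1
    rw [div_one]
    linarith
  · have hx := quot_pos hM.pos p
    have h1 := le_youngConj hω one_pos p (Real.log_nonneg (one_le_quot hM p))
    rw [Real.exp_log hx, div_one] at h1
    have h2 : assocFun M (quot M p) ≤ p * Real.log (quot M p) - Real.log (M p) := by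
      refine assoc_le fun i => ?_
      rw [← log_term_eq hM hx]
      have hi := hM.pos i
      refine Real.log_le_log (by positivity) ?_
      rw [div_le_div_iff₀ hi (hM.pos p)]
      linarith [quot_extremal hM.pos hM.logConvex p i]
    linarith

end Assoc

lemma condM2_of_function {M : ℕ → ℝ} (hM : IsLC M) (h12 : cond12L2Rseq M) {ω : ℝ → ℝ}
    (hω : IsWeightFun ω) (h6 : condOmega6 ω) (h : SRoumieuW ω 1 = SRoumieuSeq M 1) :
    condM2 M := by
  have hg := hω.toIsGenWeightFun
  rw [SRoumieuW_eq_seq hg h6] at h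
  obtain ⟨C₁, hC₁, h₁, hh₁, H₁⟩ := seq_compare hM.pos hM.logConvex h12 h.ge
  obtain ⟨C₂, hC₂, h₂, hh₂, H₂⟩ := seq_compare (Q := wSeq ω 1) (P := M) wSeq_pos
    (wSeq_logConvex hg) (wSeq_12L2R hω) h.le
  obtain ⟨C₃, hC₃, h₃, hh₃, H₃⟩ := wSeq_modGrowth hg h6
  set K := C₁ * C₃ * C₂ * C₂ with hK
  set D := h₁ * h₃ * h₂ with hD
  have hK0 : 0 < K := by positivity
  have hD0 : 0 < D := by positivity
  have main : ∀ p q, M (p + q) ≤ K * D ^ (p + q) * M p * M q := fun p q => by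
    have hp := hM.pos p
    have hq := hM.pos q
    have hwq := wSeq_pos (ω := ω) q
    calc M (p + q) ≤ C₁ * h₁ ^ (p + q) * wSeq ω 1 (p + q) := H₁ _
      _ ≤ C₁ * h₁ ^ (p + q) * (C₃ * h₃ ^ (p + q) * (wSeq ω 1 p * wSeq ω 1 q)) := by
          gcongr
          exact H₃ p q
      _ ≤ C₁ * h₁ ^ (p + q) * (C₃ * h₃ ^ (p + q) *
            ((C₂ * h₂ ^ p * M p) * (C₂ * h₂ ^ q * M q))) := by
          gcongr
          · exact H₂ p
          · exact H₂ q
      _ = _ := by rw [hK, hD, mul_pow, mul_pow, pow_add h₂]; ring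
  refine ⟨max K 1 * max D 1, one_le_mul_of_one_le_of_one_le (le_max_right _ _) (le_max_right _ _),
    fun p q => ?_⟩
  rcases Nat.eq_zero_or_pos (p + q) with h0 | h0
  · -- the multiplicative constant cannot be absorbed here, but `M 0 = 1`
    obtain ⟨rfl, rfl⟩ : p = 0 ∧ q = 0 := by omega
    simp [hM.norm0]
  · have hp := hM.pos p
    have hq := hM.pos q
    refine (main p q).trans ?_
    rw [mul_pow (max K 1)]
    have h1 : K ≤ max K 1 ^ (p + q) :=
      (le_max_left _ _).trans (le_self_pow₀ (le_max_right _ _) h0.ne')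
    have h2 : D ^ (p + q) ≤ max D 1 ^ (p + q) := pow_le_pow_left₀ hD0.le (le_max_left _ _) _
    gcongr

/-- Theorem `comparsion1`, Roumieu case: let `M ∈ LC` satisfy (12L2R) and
(M2'), with `ω_M` satisfying (α). Then `M` has moderate growth (M2) iff there is a weight
function `ω` satisfying (ω6) with `S_{{ω}}(ℝ^d) = S_{{M}}(ℝ^d)` for all `d`; moreover, in
that case `ω` can be taken to be the associated function `ω_M`. -/
theorem comparison_weight_sequence_to_function_roumieu (M : ℕ → ℝ) (hM : IsLC M)
    (h12 : cond12L2Rseq M) (hM2' : condM2' M) (hα : condAlpha (assocFun M)) :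
    (condM2 M ↔ ∃ ω : ℝ → ℝ, IsWeightFun ω ∧ condOmega6 ω ∧
      ∀ d : ℕ, 0 < d → SRoumieuW ω d = SRoumieuSeq M d) ∧
    (condM2 M → IsWeightFun (assocFun M) ∧ condOmega6 (assocFun M) ∧
      ∀ d : ℕ, 0 < d → SRoumieuW (assocFun M) d = SRoumieuSeq M d) := by
  have main : condM2 M → IsWeightFun (assocFun M) ∧ condOmega6 (assocFun M) ∧
      ∀ d : ℕ, 0 < d → SRoumieuW (assocFun M) d = SRoumieuSeq M d := fun h2 => by
    have hω := assoc_isWeightFun hM h12 hα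
    have h6 := assoc_omega6 hM h12 h2
    refine ⟨hω, h6, fun d _ => ?_⟩
    rw [SRoumieuW_eq_seq hω.toIsGenWeightFun h6, wSeq_assocFun hM h12 hα]
  refine ⟨⟨fun h2 => ⟨_, main h2⟩, ?_⟩, main⟩
  rintro ⟨ω, hω, h6, h⟩
  exact condM2_of_function hM h12 hω h6 (h 1 one_pos)
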